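/- arXiv:1609.04271 — 2 statements merged into one kernel-verified Lean document; each statement's English description precedes it below -/
import Mathlib

section
/- Let x, y ∈ Ω with x ≠ y, and write u = g(x), v = g(y). Then π_E(x) ≠ π_E(y), π_F(u) ≠ π_F(v), and |Λ_E(x,y) − Λ_F(u,v)| ≤ 3. -/
/-!
Write `T_n` for the displacement, in units of `3⁻ⁿ`, between the level-`n` cylinders of two
sequences. It is a Gaussian integer with `T_{n+1} = 3 T_n + (d_b - d_a)` when the next letters are
`a` and `b`, and the two cylinders meet iff the attractor meets its translate by `T_n`. Since the
attractors lie in the unit square and contain the fixed points of their maps, this happens exactly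
for `T_n ∈ {0, ±1, ±i}` in the case of `E` (`meets_iff_liveE`) and for `T_n ∈ {0, ±i}` in the case
of `F` (`meets_iff_liveF`).

The map `g` is computed letter by letter by a machine which remembers whether it stands
after `35^i`, after `42^i`, or after neither, and looks one letter ahead (`gRel.eq_out`).

Running the two displacements alongside the two machines, one finds that as long as either system
still has intersecting cylinders one level further on, the joint state is of one of three kinds
(`Linked`): the prefixes agree; or `x`, `y` have continued with `42^i` and `35^i`, which are
vertical neighbours in `E` with equal images under `g`; or the cylinders are horizontal neighbours
in `E` (with tails `21^i`, `13^i` or `31^i`, `23^i`) and vertical neighbours in `F`. That these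
states persist is a finite verification (`StepOK`). In all of them both systems have intersecting
cylinders, so the separation numbers differ by at most `1`. Finally, distinct sequences in `Ω`
separate at some level for `E`, hence also for `F`.
-/

open MeasureTheory

noncomputable section

/-- The alphabet `{1,…,5}`, encoded as `Fin 5` (letter `k` is index `k-1`). -/
abbrev Letter := Fin 5

/-- The letter `1`. -/
def l1 : Letter := 0
/-- The letter `2`. -/
def l2 : Letter := 1
/-- The letter `3`. -/
def l3 : Letter := 2
/-- The letter `4`. -/
def l4 : Letter := 3
/-- The letter `5`. -/
def l5 : Letter := 4

/-- The digit set of `E`: `(d_1,…,d_5) = (0, 1, 2, 2+i, 1+2i)`. -/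
def dE : Letter → ℂ := ![0, 1, 2, 2 + Complex.I, 1 + 2 * Complex.I]

/-- The digit set of `F`: `(e_1,…,e_5) = (1+2i, 1+i, 1, 0, 2+i)`. -/
def dF : Letter → ℂ := ![1 + 2 * Complex.I, 1 + Complex.I, 1, 0, 2 + Complex.I]

/-- The map `φ^E_j(z) = (z + d_j)/3`. -/
def phiE (j : Letter) (z : ℂ) : ℂ := (z + dE j) / 3

/-- The map `φ^F_j(z) = (z + e_j)/3`. -/
def phiF (j : Letter) (z : ℂ) : ℂ := (z + dF j) / 3

/-- For a finite word `w = w_1⋯w_n`, the composition `φ_{w_1} ∘ ⋯ ∘ φ_{w_n}`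
(the empty word gives the identity). -/
def iterPhi (φ : Letter → ℂ → ℂ) : List Letter → ℂ → ℂ
  | [] => id
  | j :: w => φ j ∘ iterPhi φ w

/-- `K` is the attractor of the IFS `{φ_j}`: the (unique) nonempty compact set with
`K = ⋃_j φ_j(K)`. -/
def IsAttractor (φ : Letter → ℂ → ℂ) (K : Set ℂ) : Prop :=
  K.Nonempty ∧ IsCompact K ∧ K = ⋃ j, φ j '' K

/-- The prefix `x_1⋯x_n` of the sequence `x`. -/
def preWord (x : ℕ → Letter) (n : ℕ) : List Letter := List.ofFn fun i : Fin n => x i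

/-- The factor `x_{j+1}⋯x_{j+L}` of `x` (`j` entries skipped, length `L`). -/
def fword (x : ℕ → Letter) (j L : ℕ) : List Letter := List.ofFn fun i : Fin L => x (j + i)

/-- `p = π_K(x)`, i.e. `p` is the point of `⋂_{n≥1} φ_{x_1⋯x_n}(K)`. -/
def codes (φ : Letter → ℂ → ℂ) (K : Set ℂ) (x : ℕ → Letter) (p : ℂ) : Prop :=
  ∀ n, p ∈ iterPhi φ (preWord x n) '' K

/-- `Ω`: the sequences that are eventually constant equal to the letter `4`. -/
def OmegaSeq : Set (ℕ → Letter) := {x | ∃ N, ∀ n, N ≤ n → x n = l4}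

/-- `Λ(x,y) = n`: the separation number of `(x,y)` for the IFS `φ` with attractor `K`
is `n`, i.e. `n` is the largest integer with `φ_{x_1⋯x_n}(K) ∩ φ_{y_1⋯y_n}(K) ≠ ∅`. -/
def SepNum (φ : Letter → ℂ → ℂ) (K : Set ℂ) (x y : ℕ → Letter) (n : ℕ) : Prop :=
  (iterPhi φ (preWord x n) '' K ∩ iterPhi φ (preWord y n) '' K).Nonempty ∧
    ∀ m, n < m → iterPhi φ (preWord x m) '' K ∩ iterPhi φ (preWord y m) '' K = ∅

/-- The factor of `x` starting at position `j` (0-indexed) of length `L` is an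
`E`-special segment: either `35^k` followed by a letter `≠ 5` (so `L = k+1`, `k ≥ 1`),
or `42^{k-1}5` (so `L = k+1`, `k ≥ 1`). -/
def ESpecial (x : ℕ → Letter) (j L : ℕ) : Prop :=
  (2 ≤ L ∧ x j = l3 ∧ (∀ i, 1 ≤ i → i < L → x (j + i) = l5) ∧ x (j + L) ≠ l5) ∨
  (2 ≤ L ∧ x j = l4 ∧ (∀ i, 1 ≤ i → i < L - 1 → x (j + i) = l2) ∧ x (j + L - 1) = l5)

/-- The entry of `x` at position `j` is an `E`-plain segment: it belongs to no
`E`-special segment of `x`. -/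
def EPlain (x : ℕ → Letter) (j : ℕ) : Prop :=
  ∀ p L, ESpecial x p L → ¬(p ≤ j ∧ j < p + L)

/-- An `E`-segment: an `E`-special segment, or a single `E`-plain entry. -/
def ESegment (x : ℕ → Letter) (j L : ℕ) : Prop :=
  ESpecial x j L ∨ (L = 1 ∧ EPlain x j)

/-- The factor of `u` starting at position `j` of length `L` is an `F`-special segment:
`42^m5` followed by a letter `≠ 5` (`L = m+2`, `m ≥ 0`), or `42^m55` (`L = m+3`, `m ≥ 0`),
or `35` (`L = 2`). -/
def FSpecial (u : ℕ → Letter) (j L : ℕ) : Prop :=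
  (2 ≤ L ∧ u j = l4 ∧ (∀ i, 1 ≤ i → i < L - 1 → u (j + i) = l2) ∧
    u (j + L - 1) = l5 ∧ u (j + L) ≠ l5) ∨
  (3 ≤ L ∧ u j = l4 ∧ (∀ i, 1 ≤ i → i < L - 2 → u (j + i) = l2) ∧
    u (j + L - 2) = l5 ∧ u (j + L - 1) = l5) ∨
  (L = 2 ∧ u j = l3 ∧ u (j + 1) = l5)

/-- The entry of `u` at position `j` is an `F`-plain segment. -/
def FPlain (u : ℕ → Letter) (j : ℕ) : Prop :=
  ∀ p L, FSpecial u p L → ¬(p ≤ j ∧ j < p + L)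

/-- An `F`-segment: an `F`-special segment, or a single `F`-plain entry. -/
def FSegment (u : ℕ → Letter) (j L : ℕ) : Prop :=
  FSpecial u j L ∨ (L = 1 ∧ FPlain u j)

/-- `b` enumerates the starting positions of a factorization of `x` into consecutive
segments: `b 0 = 0` and for each `j`, the factor occupying positions `[b j, b (j+1))`
is a segment (in the sense of `Seg`). -/
def SegDecomp (Seg : (ℕ → Letter) → ℕ → ℕ → Prop) (x : ℕ → Letter) (b : ℕ → ℕ) : Prop :=
  b 0 = 0 ∧ ∀ j, Seg x (b j) (b (j + 1) - b j)

/-- The word map `g₀`: `35^k ↦ 42^{k-1}5`, `42^k5 ↦ 42^{k-1}55` (`k ≥ 1`), `45 ↦ 35`,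
and `a ↦ a` for single letters.  (All these maps preserve length.) -/
def g0 (w : List Letter) : List Letter :=
  if w.length ≤ 1 then w
  else if w = [l4, l5] then [l3, l5]
  else if w.headI = l3 then l4 :: (List.replicate (w.length - 2) l2 ++ [l5])
  else l4 :: (List.replicate (w.length - 3) l2 ++ [l5, l5])

/-- `u = g(x)`: for some `E`-segment decomposition `x = X₁X₂⋯` (with starting positions
`b`), the sequence `u` is `g₀(X₁)g₀(X₂)⋯`, each `g₀(X_j)` occupying the positions
of `X_j` (note that `g₀` preserves lengths). -/
def gRel (x u : ℕ → Letter) : Prop :=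
  ∃ b : ℕ → ℕ, SegDecomp ESegment x b ∧
    ∀ j, fword u (b j) (b (j + 1) - b j) = g0 (fword x (b j) (b (j + 1) - b j))

/-- `E' = π_E(Ω)`. -/
def Eset' (E : Set ℂ) : Set ℂ := {p | ∃ x ∈ OmegaSeq, codes phiE E x p}

/-- `F' = π_F(Ω)`. -/
def Fset' (F : Set ℂ) : Set ℂ := {q | ∃ u ∈ OmegaSeq, codes phiF F u q}

/-- The dimension `s = log 5 / log 3`. -/
def sDim : ℝ := Real.log 5 / Real.log 3

end

/-! ### Intersections of cylinders and integer displacements -/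

/-- The Gaussian integer `t.1 + t.2 i` as a complex number. -/
def emb (t : ℤ × ℤ) : ℂ := ⟨t.1, t.2⟩

/-- The digits of `E` as integer vectors. -/
def intE : Letter → ℤ × ℤ := ![(0, 0), (1, 0), (2, 0), (2, 1), (1, 2)]

/-- The digits of `F` as integer vectors. -/
def intF : Letter → ℤ × ℤ := ![(1, 2), (1, 1), (1, 0), (0, 0), (2, 1)]

/-- How the displacement `t` between two cylinders of equal level changes when they are refined
by the letters `a` and `b`, for the digit vectors `δ`. -/
def dispStep (δ : Letter → ℤ × ℤ) (t : ℤ × ℤ) (a b : Letter) : ℤ × ℤ :=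
  (3 * t.1 + ((δ b).1 - (δ a).1), 3 * t.2 + ((δ b).2 - (δ a).2))

/-- The displacement from the level-`n` cylinder of `x` to that of `y`, in units of `3⁻ⁿ`. -/
def disp (δ : Letter → ℤ × ℤ) (x y : ℕ → Letter) : ℕ → ℤ × ℤ
  | 0 => (0, 0)
  | n + 1 => dispStep δ (disp δ x y n) (x n) (y n)

/-- The displacements `t` for which `E` meets `E + t`. -/
def LiveE (t : ℤ × ℤ) : Prop := t.1.natAbs + t.2.natAbs ≤ 1

/-- The displacements `t` for which `F` meets `F + t`. -/
def LiveF (t : ℤ × ℤ) : Prop := t.1 = 0 ∧ t.2.natAbs ≤ 1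

instance : DecidablePred LiveE := fun t => by unfold LiveE; infer_instance
instance : DecidablePred LiveF := fun t => by unfold LiveF; infer_instance

/-- `K` meets its translate `K + t`. -/
def Meets (K : Set ℂ) (t : ℤ × ℤ) : Prop := ∃ p ∈ K, ∃ q ∈ K, p - q = emb t

/-- `φ` is the IFS `z ↦ (z + δ_j)/3`, whose digits `δ_j` lie in `{0,1,2}²`. -/
def IsGridIFS (φ : Letter → ℂ → ℂ) (δ : Letter → ℤ × ℤ) : Prop :=
  (∀ j z, φ j z = (z + emb (δ j)) / 3) ∧
    ∀ j, (0 ≤ (δ j).1 ∧ (δ j).1 ≤ 2) ∧ 0 ≤ (δ j).2 ∧ (δ j).2 ≤ 2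

lemma intE_bounds : ∀ j, (0 ≤ (intE j).1 ∧ (intE j).1 ≤ 2) ∧ 0 ≤ (intE j).2 ∧ (intE j).2 ≤ 2 := by
  decide

lemma intF_bounds : ∀ j, (0 ≤ (intF j).1 ∧ (intF j).1 ≤ 2) ∧ 0 ≤ (intF j).2 ∧ (intF j).2 ≤ 2 := by
  decide

lemma isGridIFS_E : IsGridIFS phiE intE := by
  refine ⟨fun j z => ?_, intE_bounds⟩
  have : dE j = emb (intE j) := by
    fin_cases j <;> apply Complex.ext <;> simp [dE, intE, emb]
  rw [phiE, this]

lemma isGridIFS_F : IsGridIFS phiF intF := by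
  refine ⟨fun j z => ?_, intF_bounds⟩
  have : dF j = emb (intF j) := by
    fin_cases j <;> apply Complex.ext <;> simp [dF, intF, emb]
  rw [phiF, this]

lemma iterPhi_append (φ : Letter → ℂ → ℂ) (w w' : List Letter) (z : ℂ) :
    iterPhi φ (w ++ w') z = iterPhi φ w (iterPhi φ w' z) := by
  induction w with
  | nil => rfl
  | cons a w ih => simp [iterPhi, ih]

lemma iterPhi_preWord_succ (φ : Letter → ℂ → ℂ) (x : ℕ → Letter) (n : ℕ) (z : ℂ) :
    iterPhi φ (preWord x (n + 1)) z = iterPhi φ (preWord x n) (φ (x n) z) := by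
  have : preWord x (n + 1) = preWord x n ++ [x n] := by
    rw [preWord, List.ofFn_succ_last]
    rfl
  rw [this, iterPhi_append]
  rfl

section Grid

variable {φ : Letter → ℂ → ℂ} {δ : Letter → ℤ × ℤ}

lemma IsGridIFS.sub_eq_emb_iff (h : IsGridIFS φ δ) (t : ℤ × ℤ) (a b : Letter) (p q : ℂ) :
    φ a p - φ b q = emb t ↔ p - q = emb (dispStep δ t a b) := by
  rw [h.1, h.1, ← sub_div, div_eq_iff (by norm_num)]
  simp only [Complex.ext_iff, emb, dispStep, Complex.sub_re, Complex.sub_im, Complex.add_re,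
    Complex.add_im, Complex.mul_re, Complex.mul_im, Complex.re_ofNat, Complex.im_ofNat]
  push_cast
  constructor <;> rintro ⟨h1, h2⟩ <;> constructor <;> linarith

lemma IsGridIFS.iterPhi_eq_iff (h : IsGridIFS φ δ) (x y : ℕ → Letter) (n : ℕ) :
    ∀ p q : ℂ, iterPhi φ (preWord x n) p = iterPhi φ (preWord y n) q ↔
      p - q = emb (disp δ x y n) := by
  induction n with
  | zero =>
    intro p q
    have : emb (disp δ x y 0) = 0 := by simp [emb, disp, Complex.ext_iff]
    rw [this, sub_eq_zero]
    rfl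
  | succ n ih =>
    intro p q
    rw [iterPhi_preWord_succ, iterPhi_preWord_succ, ih, h.sub_eq_emb_iff]
    rfl

lemma IsGridIFS.inter_nonempty_iff (h : IsGridIFS φ δ) (K : Set ℂ) (x y : ℕ → Letter) (n : ℕ) :
    (iterPhi φ (preWord x n) '' K ∩ iterPhi φ (preWord y n) '' K).Nonempty ↔
      Meets K (disp δ x y n) := by
  constructor
  · rintro ⟨z, ⟨p, hp, rfl⟩, ⟨q, hq, hpq⟩⟩
    exact ⟨p, hp, q, hq, (h.iterPhi_eq_iff x y n p q).1 hpq.symm⟩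
  · rintro ⟨p, hp, q, hq, hpq⟩
    exact ⟨_, ⟨p, hp, rfl⟩, ⟨q, hq, ((h.iterPhi_eq_iff x y n p q).2 hpq).symm⟩⟩

variable {K : Set ℂ}

lemma IsAttractor.exists_preimage (hK : IsAttractor φ K) {p : ℂ} (hp : p ∈ K) :
    ∃ j, ∃ p' ∈ K, φ j p' = p := by
  rw [hK.2.2] at hp
  simpa using hp

lemma IsAttractor.map_mem (hK : IsAttractor φ K) (j : Letter) {p : ℂ} (hp : p ∈ K) :
    φ j p ∈ K := by
  rw [hK.2.2]
  exact Set.mem_iUnion.2 ⟨j, p, hp, rfl⟩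

/-- A continuous real function on the attractor that each map transforms by
`c ↦ (c + e)/3` with `0 ≤ e ≤ 2` takes values in `[0,1]`: compare its extreme values with
those at a preimage. -/
lemma IsAttractor.coord_mem_Icc (hK : IsAttractor φ K) (f : ℂ → ℝ) (hf : Continuous f)
    (e : Letter → ℝ) (he : ∀ j, 0 ≤ e j ∧ e j ≤ 2) (hfe : ∀ j z, f (φ j z) = (f z + e j) / 3)
    {p : ℂ} (hp : p ∈ K) : 0 ≤ f p ∧ f p ≤ 1 := by
  obtain ⟨a, ha, hmin⟩ := hK.2.1.exists_isMinOn hK.1 hf.continuousOn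
  obtain ⟨b, hb, hmax⟩ := hK.2.1.exists_isMaxOn hK.1 hf.continuousOn
  obtain ⟨i, a', ha', rfl⟩ := hK.exists_preimage ha
  obtain ⟨j, b', hb', rfl⟩ := hK.exists_preimage hb
  have h1 : f (φ i a') ≤ f a' := hmin ha'
  have h2 : f b' ≤ f (φ j b') := hmax hb'
  have h3 : f (φ i a') ≤ f p := hmin hp
  have h4 : f p ≤ f (φ j b') := hmax hp
  rw [hfe] at h1 h2 h3 h4
  have := he i
  have := he j
  constructor <;> linarith

lemma IsAttractor.mem_unitSquare (hK : IsAttractor φ K) (h : IsGridIFS φ δ) {p : ℂ}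
    (hp : p ∈ K) : (0 ≤ p.re ∧ p.re ≤ 1) ∧ 0 ≤ p.im ∧ p.im ≤ 1 := by
  constructor
  · refine hK.coord_mem_Icc Complex.re Complex.continuous_re (fun j => (δ j).1)
      (fun j => ?_) (fun j z => ?_) hp
    · exact_mod_cast (h.2 j).1
    · rw [h.1]; simp [emb]
  · refine hK.coord_mem_Icc Complex.im Complex.continuous_im (fun j => (δ j).2)
      (fun j => ?_) (fun j z => ?_) hp
    · exact_mod_cast (h.2 j).2
    · rw [h.1]; simp [emb]

/-- The attractor contains the fixed point of each map: the point of `K` nearest to it is mapped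
into `K` three times closer. -/
lemma IsAttractor.fixedPoint_mem (hK : IsAttractor φ K) (h : IsGridIFS φ δ) (j : Letter) :
    emb (δ j) / 2 ∈ K := by
  set c : ℂ := emb (δ j) / 2 with hc
  have hcont : Continuous fun z : ℂ => ‖z - c‖ := by fun_prop
  obtain ⟨a, ha, hmin⟩ := hK.2.1.exists_isMinOn hK.1 hcont.continuousOn
  have h1 : ‖a - c‖ ≤ ‖φ j a - c‖ := hmin (hK.map_mem j ha)
  have h2 : φ j a - c = (a - c) / 3 := by
    rw [h.1, hc]; ring
  rw [h2, norm_div] at h1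
  have h3 : ‖(3 : ℂ)‖ = 3 := by simp
  rw [h3] at h1
  have h4 : ‖a - c‖ = 0 := le_antisymm (by linarith [norm_nonneg (a - c)]) (norm_nonneg _)
  have : a = c := sub_eq_zero.1 (norm_eq_zero.1 h4)
  exact this ▸ ha

lemma Meets.bound (hK : IsAttractor φ K) (h : IsGridIFS φ δ) {t : ℤ × ℤ} (ht : Meets K t) :
    (-1 ≤ t.1 ∧ t.1 ≤ 1) ∧ -1 ≤ t.2 ∧ t.2 ≤ 1 := by
  obtain ⟨p, hp, q, hq, hpq⟩ := ht
  have hp := hK.mem_unitSquare h hp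
  have hq := hK.mem_unitSquare h hq
  have hre : p.re - q.re = t.1 := by simpa [emb] using congrArg Complex.re hpq
  have him : p.im - q.im = t.2 := by simpa [emb] using congrArg Complex.im hpq
  refine ⟨⟨?_, ?_⟩, ?_, ?_⟩ <;> rify <;> linarith

/-- Meeting descends to a pair of first-level cylinders. -/
lemma Meets.descend (hK : IsAttractor φ K) (h : IsGridIFS φ δ) {t : ℤ × ℤ} (ht : Meets K t) :
    ∃ a b, Meets K (dispStep δ t a b) := by
  obtain ⟨p, hp, q, hq, hpq⟩ := ht
  obtain ⟨a, p', hp', rfl⟩ := hK.exists_preimage hp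
  obtain ⟨b, q', hq', rfl⟩ := hK.exists_preimage hq
  exact ⟨a, b, p', hp', q', hq', (h.sub_eq_emb_iff t a b p' q').1 hpq⟩

lemma Meets.symm {t : ℤ × ℤ} (ht : Meets K t) : Meets K (-t.1, -t.2) := by
  obtain ⟨p, hp, q, hq, hpq⟩ := ht
  refine ⟨q, hq, p, hp, ?_⟩
  rw [← neg_sub, hpq]
  simp [emb, Complex.ext_iff]

lemma IsAttractor.meets_zero (hK : IsAttractor φ K) : Meets K (0, 0) := by
  obtain ⟨p, hp⟩ := hK.1
  exact ⟨p, hp, p, hp, by simp [emb, Complex.ext_iff]⟩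

end Grid

lemma meets_iff_liveE {E : Set ℂ} (hE : IsAttractor phiE E) (t : ℤ × ℤ) :
    Meets E t ↔ LiveE t := by
  constructor
  · intro h
    have h1 := h.bound hE isGridIFS_E
    obtain ⟨a, b, h2⟩ := h.descend hE isGridIFS_E
    have h2 := h2.bound hE isGridIFS_E
    obtain ⟨t1, t2⟩ := t
    -- The four diagonal displacements leave the unit square after one refinement.
    have key : ∀ r s : Fin 3, ∀ a b : Letter,
        let t : ℤ × ℤ := ((r : ℤ) - 1, (s : ℤ) - 1)
        (-1 ≤ (dispStep intE t a b).1 ∧ (dispStep intE t a b).1 ≤ 1) ∧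
          -1 ≤ (dispStep intE t a b).2 ∧ (dispStep intE t a b).2 ≤ 1 → LiveE t := by
      decide +kernel
    obtain ⟨⟨h11, h12⟩, h13, h14⟩ := h1
    simp only at h11 h12 h13 h14
    interval_cases t1 <;> interval_cases t2
    · exact key 0 0 a b h2
    · exact key 0 1 a b h2
    · exact key 0 2 a b h2
    · exact key 1 0 a b h2
    · exact key 1 1 a b h2
    · exact key 1 2 a b h2
    · exact key 2 0 a b h2
    · exact key 2 1 a b h2
    · exact key 2 2 a b h2
  · intro h
    -- `1 - 0` uses the fixed points of the maps `3` and `1`.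
    have hH : Meets E (1, 0) :=
      ⟨_, hE.fixedPoint_mem isGridIFS_E l3, _, hE.fixedPoint_mem isGridIFS_E l1, by
        simp [emb, intE, l1, l3, Complex.ext_iff]⟩
    -- `(1/2 + i) - 1/2` uses the fixed points of the maps `5` and `2`.
    have hV : Meets E (0, 1) :=
      ⟨_, hE.fixedPoint_mem isGridIFS_E l5, _, hE.fixedPoint_mem isGridIFS_E l2, by
        simp [emb, intE, l2, l5, Complex.ext_iff]⟩
    have hH' := hH.symm
    have hV' := hV.symm
    have h0 := hE.meets_zero
    obtain ⟨t1, t2⟩ := t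
    simp only [LiveE] at h
    have : (t1 = 0 ∧ t2 = 0) ∨ (t1 = 1 ∧ t2 = 0) ∨ (t1 = -1 ∧ t2 = 0) ∨ (t1 = 0 ∧ t2 = 1) ∨
        (t1 = 0 ∧ t2 = -1) := by omega
    rcases this with ⟨rfl, rfl⟩ | ⟨rfl, rfl⟩ | ⟨rfl, rfl⟩ | ⟨rfl, rfl⟩ | ⟨rfl, rfl⟩ <;>
      simpa using ‹_›

lemma meets_iff_liveF {F : Set ℂ} (hF : IsAttractor phiF F) (t : ℤ × ℤ) :
    Meets F t ↔ LiveF t := by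
  constructor
  · intro h
    have h1 := h.bound hF isGridIFS_F
    obtain ⟨a, b, h2⟩ := h.descend hF isGridIFS_F
    obtain ⟨c, d, h3⟩ := h2.descend hF isGridIFS_F
    have h2 := h2.bound hF isGridIFS_F
    have h3 := h3.bound hF isGridIFS_F
    -- A unit horizontal displacement can only be refined by `5` and `4`, which forces the
    -- vertical displacement out of range within two steps.
    have key : ∀ a b : Letter, ((intF b).1 - (intF a).1 = 2 ∧ (intF b).2 - (intF a).2 = 1) ∨
        ((intF b).1 - (intF a).1 = -2 ∧ (intF b).2 - (intF a).2 = -1) ∨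
        ((intF b).1 - (intF a).1 ≤ 1 ∧ -1 ≤ (intF b).1 - (intF a).1) := by
      decide
    have hab := key a b
    have hcd := key c d
    simp only [dispStep] at h2 h3
    refine ⟨?_, ?_⟩ <;> omega
  · intro h
    -- `(1/2 + i) - 1/2` uses the fixed points of the maps `1` and `3`.
    have hV : Meets F (0, 1) :=
      ⟨_, hF.fixedPoint_mem isGridIFS_F l1, _, hF.fixedPoint_mem isGridIFS_F l3, by
        simp [emb, intF, l1, l3, Complex.ext_iff]⟩
    have hV' := hV.symm
    have h0 := hF.meets_zero
    obtain ⟨t1, t2⟩ := t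
    simp only [LiveF] at h
    have : (t1 = 0 ∧ t2 = 0) ∨ (t1 = 0 ∧ t2 = 1) ∨ (t1 = 0 ∧ t2 = -1) := by omega
    rcases this with ⟨rfl, rfl⟩ | ⟨rfl, rfl⟩ | ⟨rfl, rfl⟩ <;> simpa using ‹_›

lemma LiveE.of_step {t : ℤ × ℤ} {a b : Letter} (h : LiveE (dispStep intE t a b)) : LiveE t := by
  have ha := intE_bounds a
  have hb := intE_bounds b
  simp only [LiveE, dispStep] at *
  omega

lemma LiveF.of_step {t : ℤ × ℤ} {a b : Letter} (h : LiveF (dispStep intF t a b)) : LiveF t := by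
  have ha := intF_bounds a
  have hb := intF_bounds b
  simp only [LiveF, dispStep] at *
  omega

/-! ### The map `g` as a sequential machine -/

/-- The left context of a position: `three` after a factor `35^i`, `four` after `42^i` (`i ≥ 0`),
and `none` otherwise. -/
inductive Ctx
  | none
  | three
  | four
  deriving DecidableEq

instance : Fintype Ctx := ⟨{.none, .three, .four}, by rintro (_ | _ | _) <;> decide⟩

/-- Update of the left context by a letter. -/
def Ctx.next (s : Ctx) (a : Letter) : Ctx :=
  if a = l3 then .three
  else if a = l4 then .four
  else if a = l5 ∧ s = .three then .three
  else if a = l2 ∧ s = .four then .four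
  else .none

/-- The left context of position `n` in `x`. -/
def ctx (x : ℕ → Letter) : ℕ → Ctx
  | 0 => .none
  | n + 1 => (ctx x n).next (x n)

/-- The letter of `g(x)` at a position with left context `s` and letter `a`, where `f` tells
whether the following letter is `5`. -/
def outLetter (s : Ctx) (a : Letter) (f : Bool) : Letter :=
  if a = l3 ∧ f then l4
  else if a = l4 ∧ f then l3
  else if a = l5 ∧ s = .three ∧ f then l2
  else if a = l2 ∧ s = .four ∧ f then l5
  else a

lemma ctx_eq_three {x : ℕ → Letter} {p : ℕ} (hp : x p = l3) (i : ℕ)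
    (h : ∀ k, 1 ≤ k → k ≤ i → x (p + k) = l5) : ctx x (p + i + 1) = .three := by
  induction i with
  | zero => simp [ctx, hp, Ctx.next]
  | succ i ih =>
    have h1 := ih fun k h1 h2 => h k h1 (by omega)
    have h2 := h (i + 1) (by omega) le_rfl
    rw [ctx, show p + (i + 1) = p + i + 1 by omega, h1, show p + i + 1 = p + (i + 1) by omega, h2]
    decide

lemma ctx_eq_four {x : ℕ → Letter} {p : ℕ} (hp : x p = l4) (i : ℕ)
    (h : ∀ k, 1 ≤ k → k ≤ i → x (p + k) = l2) : ctx x (p + i + 1) = .four := by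
  induction i with
  | zero => rw [ctx]; simp only [hp]; cases ctx x p <;> decide
  | succ i ih =>
    have h1 := ih fun k h1 h2 => h k h1 (by omega)
    have h2 := h (i + 1) (by omega) le_rfl
    rw [ctx, show p + (i + 1) = p + i + 1 by omega, h1, show p + i + 1 = p + (i + 1) by omega, h2]
    decide

lemma exists_of_ctx_three {x : ℕ → Letter} {n : ℕ} (h : ctx x n = .three) :
    ∃ p < n, x p = l3 ∧ ∀ k, p < k → k < n → x k = l5 := by
  induction n with
  | zero => simp [ctx] at h
  | succ n ih =>
    have key : ∀ s a, Ctx.next s a = .three → a = l3 ∨ (a = l5 ∧ s = .three) := by decide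
    rcases key _ _ h with h3 | ⟨h5, hs⟩
    · exact ⟨n, by omega, h3, fun k h1 h2 => by omega⟩
    · obtain ⟨p, hp, hp3, hk⟩ := ih hs
      refine ⟨p, by omega, hp3, fun k h1 h2 => ?_⟩
      rcases Nat.lt_succ_iff_lt_or_eq.1 h2 with h2 | rfl
      · exact hk k h1 h2
      · exact h5

lemma exists_of_ctx_four {x : ℕ → Letter} {n : ℕ} (h : ctx x n = .four) :
    ∃ p < n, x p = l4 ∧ ∀ k, p < k → k < n → x k = l2 := by
  induction n with
  | zero => simp [ctx] at h
  | succ n ih =>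
    have key : ∀ s a, Ctx.next s a = .four → a = l4 ∨ (a = l2 ∧ s = .four) := by decide
    rcases key _ _ h with h3 | ⟨h5, hs⟩
    · exact ⟨n, by omega, h3, fun k h1 h2 => by omega⟩
    · obtain ⟨p, hp, hp3, hk⟩ := ih hs
      refine ⟨p, by omega, hp3, fun k h1 h2 => ?_⟩
      rcases Nat.lt_succ_iff_lt_or_eq.1 h2 with h2 | rfl
      · exact hk k h1 h2
      · exact h5

/-- A letter `5` preceded by `35^i` lies in an `E`-special segment; the run of `5`s ends because
the sequence is eventually `4`. -/
lemma exists_ESpecial_of_three {x : ℕ → Letter} (hx : x ∈ OmegaSeq) {p n : ℕ} (hpn : p < n)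
    (hp : x p = l3) (h : ∀ k, p < k → k ≤ n → x k = l5) :
    ∃ L, ESpecial x p L ∧ n < p + L := by
  obtain ⟨N, hN⟩ := hx
  have hex : ∃ m, n < m ∧ x m ≠ l5 :=
    ⟨max N (n + 1), by omega, by rw [hN _ (le_max_left _ _)]; decide⟩
  classical
  have hspec := Nat.find_spec hex
  have hmin := fun m hm => Nat.find_min hex (m := m) hm
  set m := Nat.find hex
  refine ⟨m - p, Or.inl ⟨by omega, hp, fun i h1 h2 => ?_, ?_⟩, by omega⟩
  · by_cases hi : p + i ≤ n
    · exact h _ (by omega) hi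
    · by_contra h5
      exact hmin (p + i) (by omega) ⟨by omega, h5⟩
  · rw [show p + (m - p) = m by omega]
    exact hspec.2

lemma EPlain.out_eq {x : ℕ → Letter} (hx : x ∈ OmegaSeq) {n : ℕ} (h : EPlain x n) :
    outLetter (ctx x n) (x n) (decide (x (n + 1) = l5)) = x n := by
  unfold outLetter
  simp only [decide_eq_true_eq]
  split_ifs with h1 h2 h3 h4
  · obtain ⟨L, hL, hn⟩ := exists_ESpecial_of_three hx (n := n + 1) (by omega) h1.1
      (fun k hk1 hk2 => by rw [show k = n + 1 by omega]; exact h1.2)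
    exact absurd ⟨le_rfl, by omega⟩ (h n L hL)
  · refine absurd ⟨le_rfl, by omega⟩ (h n 2 (Or.inr ⟨le_rfl, h2.1, fun i _ _ => by omega, h2.2⟩))
  · obtain ⟨p, hp, hp3, hk⟩ := exists_of_ctx_three h3.2.1
    obtain ⟨L, hL, hn⟩ := exists_ESpecial_of_three hx (n := n) hp hp3
      (fun k hk1 hk2 => by
        rcases Nat.lt_or_eq_of_le hk2 with hk2 | rfl
        · exact hk k hk1 hk2
        · exact h3.1)
    exact absurd ⟨hp.le, hn⟩ (h p L hL)
  · obtain ⟨p, hp, hp4, hk⟩ := exists_of_ctx_four h4.2.1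
    refine absurd ⟨hp.le, ?_⟩ (h p (n + 2 - p) (Or.inr ⟨by omega, hp4, fun i hi1 hi2 => ?_, ?_⟩))
    rotate_left 2
    · omega
    · rcases Nat.lt_or_eq_of_le (show p + i ≤ n by omega) with hi | hi
      · exact hk _ (by omega) hi
      · rw [hi]; exact h4.1
    · rw [show p + (n + 2 - p) - 1 = n + 1 by omega]
      exact h4.2.2
  · rfl

lemma ESegment.pos {x : ℕ → Letter} {p L : ℕ} (h : ESegment x p L) : 1 ≤ L := by
  rcases h with (h | h) | h
  · exact le_trans (by norm_num) h.1
  · exact le_trans (by norm_num) h.1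
  · exact h.1.ge

lemma fword_getElem? (x : ℕ → Letter) (p L i : ℕ) (hi : i < L) :
    (fword x p L)[i]? = some (x (p + i)) := by
  simp [fword, hi]

/-- On a single segment, `g₀` is computed by the machine. -/
lemma g0_segment {x : ℕ → Letter} (hx : x ∈ OmegaSeq) {p L : ℕ} (h : ESegment x p L) {i : ℕ}
    (hi : i < L) :
    (g0 (fword x p L))[i]? =
      some (outLetter (ctx x (p + i)) (x (p + i)) (decide (x (p + i + 1) = l5))) := by
  have hlen : (fword x p L).length = L := by simp [fword]
  rcases h with (⟨hL, h3, h5, hne⟩ | ⟨hL, h4, h2, h5⟩) | ⟨rfl, hpl⟩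
  · have hhead : (fword x p L).headI = l3 := by
      obtain ⟨L, rfl⟩ : ∃ L', L = L' + 1 := ⟨L - 1, by omega⟩
      simp [fword, List.ofFn_succ, h3]
    have hne' : fword x p L ≠ [l4, l5] := by
      intro h
      rw [h] at hhead
      exact absurd hhead (by decide)
    rw [g0, if_neg (by omega), if_neg hne', if_pos hhead, hlen]
    rcases Nat.eq_zero_or_pos i with rfl | hi0
    · have := h5 1 le_rfl (by omega)
      simp [outLetter, h3, this]
    · obtain ⟨i, rfl⟩ : ∃ i', i = i' + 1 := ⟨i - 1, by omega⟩
      have hs : ctx x (p + (i + 1)) = .three :=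
        ctx_eq_three h3 i fun k h1 h2 => h5 k h1 (by omega)
      rw [hs, h5 (i + 1) hi0 hi, List.getElem?_cons_succ]
      by_cases hlast : i + 2 < L
      · have := h5 (i + 2) (by omega) hlast
        rw [List.getElem?_append_left (by simp; omega), List.getElem?_replicate,
          if_pos (by omega), show p + (i + 1) + 1 = p + (i + 2) by omega, this]
        decide
      · have hL : L = i + 2 := by omega
        subst hL
        rw [List.getElem?_append_right (by simp)]
        simp [show p + (i + 1) + 1 = p + (i + 2) by omega, hne]
        decide
  · by_cases hL2 : L = 2
    · subst hL2
      have hw : fword x p 2 = [l4, l5] := by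
        simpa [fword, List.ofFn_succ, h4] using h5
      have h5' : x (p + 1) = l5 := h5
      rw [g0, if_neg (by omega), if_pos hw]
      interval_cases i
      · simp only [Nat.add_zero, h4, h5', List.getElem?_cons_zero]
        cases ctx x p <;> decide
      · have hs : ctx x (p + 1) = .four := ctx_eq_four h4 0 fun k h1 h2 => by omega
        rw [h5', hs]
        simp; cases decide (x (p + 1 + 1) = l5) <;> decide
    · have hx1 : x (p + 1) = l2 := h2 1 le_rfl (by omega)
      have hne' : fword x p L ≠ [l4, l5] := fun h => by
        have := congrArg List.length h
        simp [hlen] at this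
        omega
      have hhead : (fword x p L).headI ≠ l3 := by
        obtain ⟨L, rfl⟩ : ∃ L', L = L' + 1 := ⟨L - 1, by omega⟩
        simp [fword, List.ofFn_succ, h4]
        decide
      rw [g0, if_neg (by omega), if_neg hne', if_neg hhead, hlen]
      rcases Nat.eq_zero_or_pos i with rfl | hi0
      · simp only [Nat.add_zero, hx1, h4, List.getElem?_cons_zero]
        cases ctx x p <;> decide
      · obtain ⟨i, rfl⟩ : ∃ i', i = i' + 1 := ⟨i - 1, by omega⟩
        have hs : ctx x (p + (i + 1)) = .four :=
          ctx_eq_four h4 i fun k h1 h2' => h2 k h1 (by omega)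
        rw [hs, List.getElem?_cons_succ]
        by_cases hA : i + 3 < L
        · rw [List.getElem?_append_left (by simp; omega), List.getElem?_replicate,
            if_pos (by omega), h2 (i + 1) hi0 (by omega),
            show p + (i + 1) + 1 = p + (i + 2) by omega, h2 (i + 2) (by omega) (by omega)]
          decide
        · rw [List.getElem?_append_right (by simp; omega)]
          simp only [List.length_replicate]
          by_cases hB : i + 3 = L
          · rw [h2 (i + 1) hi0 (by omega), show i - (L - 3) = 0 by omega,
              show p + (i + 1) + 1 = p + L - 1 by omega, h5]
            decide
          · rw [show i - (L - 3) = 1 by omega, show p + (i + 1) = p + L - 1 by omega, h5]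
            cases decide (x (p + L - 1 + 1) = l5) <;> decide
  · obtain rfl : i = 0 := by omega
    have : fword x p 1 = [x p] := by simp [fword]
    simp only [g0, this, Nat.add_zero]
    rw [hpl.out_eq hx]
    simp

/-- `g` is computed by the sequential machine `ctx`, `outLetter` with lookahead one. -/
lemma gRel.eq_out {x u : ℕ → Letter} (hx : x ∈ OmegaSeq) (h : gRel x u) (n : ℕ) :
    u n = outLetter (ctx x n) (x n) (decide (x (n + 1) = l5)) := by
  obtain ⟨b, ⟨hb0, hb⟩, hg⟩ := h
  have hlt : ∀ j, b j < b (j + 1) := fun j => by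
    have := (hb j).pos
    omega
  have hmono : StrictMono b := strictMono_nat_of_lt_succ hlt
  -- The segment containing `n` is the last one starting at or before `n`.
  have hseg : ∃ j, b j ≤ n ∧ n < b (j + 1) := by
    have hex : ∃ j, n < b j := ⟨n + 1, lt_of_lt_of_le (Nat.lt_succ_self n) hmono.le_apply⟩
    classical
    have h1 := Nat.find_spec hex
    have h0 : Nat.find hex ≠ 0 := fun h => by rw [h, hb0] at h1; omega
    refine ⟨Nat.find hex - 1, ?_, ?_⟩
    · exact not_lt.1 (Nat.find_min hex (by omega))
    · rwa [Nat.sub_add_cancel (by omega)]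
  obtain ⟨j, hj1, hj2⟩ := hseg
  have h1 := g0_segment hx (hb j) (i := n - b j) (by omega)
  rw [← hg j, fword_getElem? _ _ _ _ (by omega), show b j + (n - b j) = n by omega] at h1
  exact Option.some.inj h1

/-! ### Comparison of the two displacements -/

/-- The joint invariant of the displacements `tE`, `tF` and the two readers of `x` and `y`, which
stand in contexts `s`, `r` before letters `a`, `b`. Either the prefixes of `x` and `y` agree; or
`x`, `y` continue with `42^i` and `35^i` after a common prefix (`E`-cylinders vertically adjacent,
`F`-words equal); or the `E`-cylinders are horizontally and the `F`-cylinders vertically adjacent.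
The conditions on `a`, `b` record that the last output letters, which depend on the lookahead,
are equal. -/
def Linked (tE tF : ℤ × ℤ) (s r : Ctx) (a b : Letter) : Prop :=
  (tE = (0, 0) ∧ tF = (0, 0) ∧ s = r ∧ (s = .none ∨ (a = l5 ↔ b = l5))) ∨
  (tF = (0, 0) ∧ (a = l5 ↔ b ≠ l5) ∧
    ((tE = (0, -1) ∧ s = .four ∧ r = .three) ∨ (tE = (0, 1) ∧ s = .three ∧ r = .four))) ∨
  ((tE = (1, 0) ∧ tF = (0, -1)) ∨ (tE = (-1, 0) ∧ tF = (0, 1)))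

instance (tE tF : ℤ × ℤ) (s r : Ctx) (a b : Letter) : Decidable (Linked tE tF s r a b) := by
  unfold Linked; infer_instance

lemma Linked.liveE {tE tF : ℤ × ℤ} {s r : Ctx} {a b : Letter} (h : Linked tE tF s r a b) :
    LiveE tE := by
  rcases h with ⟨rfl, -⟩ | ⟨-, -, ⟨rfl, -⟩ | ⟨rfl, -⟩⟩ | ⟨rfl, -⟩ | ⟨rfl, -⟩ <;> decide

lemma Linked.liveF {tE tF : ℤ × ℤ} {s r : Ctx} {a b : Letter} (h : Linked tE tF s r a b) :
    LiveF tF := by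
  rcases h with ⟨-, rfl, -⟩ | ⟨rfl, -⟩ | ⟨-, rfl⟩ | ⟨-, rfl⟩ <;> decide

/-- `Linked` survives the reading of `a`, `b` provided that one of the displacements is still live
after the next letters `a'`, `b'` are read as well; `f`, `f'` tell whether the letters after
`a'`, `b'` are `5`. -/
def StepOK (tE tF : ℤ × ℤ) (s r : Ctx) : Prop :=
  ∀ a b : Letter, Linked tE tF s r a b → ∀ a' b' : Letter,
    ∀ f f' : Bool,
      LiveE (dispStep intE (dispStep intE tE a b) a' b') ∨
      LiveF (dispStep intF (dispStep intF tF (outLetter s a (decide (a' = l5)))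
        (outLetter r b (decide (b' = l5))))
          (outLetter (s.next a) a' f) (outLetter (r.next b) b' f')) →
      Linked (dispStep intE tE a b)
        (dispStep intF tF (outLetter s a (decide (a' = l5))) (outLetter r b (decide (b' = l5))))
        (s.next a) (r.next b) a' b'

instance (tE tF : ℤ × ℤ) (s r : Ctx) : Decidable (StepOK tE tF s r) := by
  unfold StepOK; infer_instance

lemma stepOK_agree : ∀ s, StepOK (0, 0) (0, 0) s s := by decide +kernel

lemma stepOK_vertical : StepOK (0, -1) (0, 0) .four .three ∧ StepOK (0, 1) (0, 0) .three .four := by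
  decide +kernel

lemma stepOK_horizontal : ∀ s r, StepOK (1, 0) (0, -1) s r ∧ StepOK (-1, 0) (0, 1) s r := by
  decide +kernel

lemma Linked.stepOK {tE tF : ℤ × ℤ} {s r : Ctx} {a b : Letter} (h : Linked tE tF s r a b) :
    StepOK tE tF s r := by
  rcases h with ⟨rfl, rfl, rfl, -⟩ | ⟨rfl, -, ⟨rfl, rfl, rfl⟩ | ⟨rfl, rfl, rfl⟩⟩ | ⟨rfl, rfl⟩ |
    ⟨rfl, rfl⟩
  · exact stepOK_agree s
  · exact stepOK_vertical.1
  · exact stepOK_vertical.2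
  · exact (stepOK_horizontal s r).1
  · exact (stepOK_horizontal s r).2

/-- If the cylinders of level `n + 1` meet for one of the two systems, then `Linked` holds at
level `n`, so the cylinders of level `n` meet for both. -/
lemma linked_of_live {x y u v : ℕ → Letter}
    (hu : ∀ n, u n = outLetter (ctx x n) (x n) (decide (x (n + 1) = l5)))
    (hv : ∀ n, v n = outLetter (ctx y n) (y n) (decide (y (n + 1) = l5))) (n : ℕ)
    (h : LiveE (disp intE x y (n + 1)) ∨ LiveF (disp intF u v (n + 1))) :
    Linked (disp intE x y n) (disp intF u v n) (ctx x n) (ctx y n) (x n) (y n) := by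
  induction n with
  | zero => exact Or.inl ⟨rfl, rfl, rfl, Or.inl rfl⟩
  | succ n ih =>
    have hn := ih (h.imp LiveE.of_step LiveF.of_step)
    have := hn.stepOK _ _ hn (x (n + 1)) (y (n + 1)) (decide (x (n + 1 + 1) = l5))
      (decide (y (n + 1 + 1) = l5))
    rw [← hu n, ← hv n] at this
    refine this ?_
    change LiveE (disp intE x y (n + 1 + 1)) ∨ LiveF (dispStep intF (disp intF u v (n + 1))
      (outLetter (ctx x (n + 1)) _ _) (outLetter (ctx y (n + 1)) _ _))
    rw [← hu (n + 1), ← hv (n + 1)]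
    exact h

/-- Distinct sequences of `Ω` have disjoint `E`-cylinders at some level: on the common tail `4^∞`
the displacement triples at every step, so it would have to vanish, and then so would every
earlier one. -/
lemma not_forall_liveE {x y : ℕ → Letter} (hx : x ∈ OmegaSeq) (hy : y ∈ OmegaSeq) (hxy : x ≠ y) :
    ¬ ∀ n, LiveE (disp intE x y n) := by
  intro h
  obtain ⟨N, hN⟩ := hx
  obtain ⟨M, hM⟩ := hy
  have hz : ∀ n, N ≤ n → M ≤ n → disp intE x y n = (0, 0) := by
    intro n h1 h2
    have h3 := h (n + 1)
    simp only [disp, dispStep, hN n h1, hM n h2, LiveE] at h3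
    ext <;> simp only <;> omega
  have key : ∀ a b : Letter, (intE b).1 - (intE a).1 = 0 → (intE b).2 - (intE a).2 = 0 → a = b := by
    decide
  have hback : ∀ n, disp intE x y (n + 1) = (0, 0) → disp intE x y n = (0, 0) ∧ x n = y n := by
    intro n hn
    have ha := intE_bounds (x n)
    have hb := intE_bounds (y n)
    simp only [disp, dispStep, Prod.mk.injEq] at hn
    refine ⟨?_, key _ _ (by omega) (by omega)⟩
    ext <;> simp only <;> omega
  have hall : ∀ k n, N + M ≤ n + k → disp intE x y n = (0, 0) := by
    intro k
    induction k with
    | zero => exact fun n hn => hz n (by omega) (by omega)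
    | succ k ih => exact fun n hn => (hback n (ih (n + 1) (by omega))).1
  exact hxy (funext fun n => (hback n (hall (N + M) (n + 1) (by omega))).2)

/-- For `x, y ∈ Ω` with `x ≠ y`, `u = g(x)`, `v = g(y)`:
`π_E(x) ≠ π_E(y)`, `π_F(u) ≠ π_F(v)`, and `|Λ_E(x,y) − Λ_F(u,v)| ≤ 3`. -/
theorem stmt13 (E F : Set ℂ) (hE : IsAttractor phiE E) (hF : IsAttractor phiF F)
    (x y : ℕ → Letter) (hx : x ∈ OmegaSeq) (hy : y ∈ OmegaSeq) (hxy : x ≠ y)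
    (u v : ℕ → Letter) (hu : gRel x u) (hv : gRel y v)
    (p q p' q' : ℂ)
    (hp : codes phiE E x p) (hq : codes phiE E y q)
    (hp' : codes phiF F u p') (hq' : codes phiF F v q') :
    p ≠ q ∧ p' ≠ q' ∧
    ∀ m n : ℕ, SepNum phiE E x y m → SepNum phiF F u v n →
      |(m : ℤ) - (n : ℤ)| ≤ 3 := by
  have hout := hu.eq_out hx
  have hout' := hv.eq_out hy
  have hEiff : ∀ n, (iterPhi phiE (preWord x n) '' E ∩ iterPhi phiE (preWord y n) '' E).Nonempty ↔
      LiveE (disp intE x y n) := fun n =>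
    (isGridIFS_E.inter_nonempty_iff E x y n).trans (meets_iff_liveE hE _)
  have hFiff : ∀ n, (iterPhi phiF (preWord u n) '' F ∩ iterPhi phiF (preWord v n) '' F).Nonempty ↔
      LiveF (disp intF u v n) := fun n =>
    (isGridIFS_F.inter_nonempty_iff F u v n).trans (meets_iff_liveF hF _)
  have hlink := linked_of_live hout hout'
  refine ⟨?_, ?_, ?_⟩
  · rintro rfl
    exact not_forall_liveE hx hy hxy fun n => (hEiff n).1 ⟨p, hp n, hq n⟩
  · rintro rfl
    exact not_forall_liveE hx hy hxy fun n =>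
      (hlink n (Or.inr ((hFiff (n + 1)).1 ⟨p', hp' _, hq' _⟩))).liveE
  · rintro m n ⟨hm, hm'⟩ ⟨hn, hn'⟩
    have h1 : m ≤ n + 1 := by
      by_contra hlt
      obtain ⟨k, rfl⟩ : ∃ k, m = k + 1 := ⟨m - 1, by omega⟩
      have := (hFiff k).2 (hlink k (Or.inl ((hEiff _).1 hm))).liveF
      exact this.ne_empty (hn' k (by omega))
    have h2 : n ≤ m + 1 := by
      by_contra hlt
      obtain ⟨k, rfl⟩ : ∃ k, n = k + 1 := ⟨n - 1, by omega⟩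
      have := (hEiff k).2 (hlink k (Or.inr ((hFiff _).1 hn))).liveE
      exact this.ne_empty (hm' k (by omega))
    rw [abs_le]
    constructor <;> omega
end

section
/- Let x, y ∈ Ω with π_E(x) ≠ π_E(y) and Λ_E(x,y) = 0 (i.e., φ^E_{x₁}(E) ∩ φ^E_{y₁}(E) = ∅). Then π_F(g(x)) ≠ π_F(g(y)) and Λ_F(g(x), g(y)) ≤ 1; in particular |Λ_E(x,y) − Λ_F(g(x),g(y))| ≤ 3. -/
/-!
Only the first two letters matter. First-level pieces of `E` that are consecutive in the chain
`1 - 2 - 3 - 4` meet (they share images of the fixed points `d_j / 2` of the maps `φ^E_j`),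
so `Λ_E(x, y) = 0` forces the first letters of `x` and `y` to be distinct and
non-consecutive in this chain (`not_adj_of_disjoint`). For `F`, the only distinct first-level
pieces that can meet are `{1, 2}` and `{2, 3}` (`phiF_eq_imp`): this follows from the fact
that `F` lies in the quadrilateral `0 ≤ im z ≤ 2 re z`, `re z + im z ≤ 3/2`, `re z - im z ≤ 1/2`,
because a real linear functional on a self-similar set with ratio `1/3` is at most half its
largest value on the digits (`linear_le_of_mem`).

The map `g` keeps the first letter except that it may turn `3` into `4`, or a word starting with
`45` into one starting with `35` (`gRel_first`). Going through the cases, the images `g(x)`, `g(y)`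
start with letters of disjoint pieces of `F`, apart from the case of a word starting with `2`
against one starting with `35`; there the pieces `2` and `35` are already disjoint by height.
So all cylinders of level at least `2` are disjoint.
-/

open MeasureTheory

/-! ### The attractors -/

/-- The point `d_j / 2` is the limit of the iterates of `φ^E_j`, hence lies in the closed
set `E`. -/
lemma fixedPoint_mem {E : Set ℂ} (hE : IsAttractor phiE E) (j : Letter) : dE j / 2 ∈ E := by
  obtain ⟨⟨e, he⟩, hc, hU⟩ := hE
  have hstep : ∀ z ∈ E, phiE j z ∈ E := fun z hz => by
    rw [hU]
    exact Set.mem_iUnion.2 ⟨j, z, hz, rfl⟩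
  have hmem : ∀ n : ℕ, dE j / 2 + (1 / 3 : ℂ) ^ n * (e - dE j / 2) ∈ E := by
    intro n
    induction n with
    | zero => simpa using he
    | succ n ih =>
      have := hstep _ ih
      convert this using 1
      simp only [phiE, pow_succ]
      ring
  have hlim : Filter.Tendsto (fun n : ℕ => dE j / 2 + (1 / 3 : ℂ) ^ n * (e - dE j / 2))
      Filter.atTop (nhds (dE j / 2)) := by
    have h0 : Filter.Tendsto (fun n : ℕ => (1 / 3 : ℂ) ^ n) Filter.atTop (nhds 0) :=
      tendsto_pow_atTop_nhds_zero_of_norm_lt_one (by norm_num)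
    simpa using (h0.mul_const (e - dE j / 2)).const_add (dE j / 2)
  exact hc.isClosed.mem_of_tendsto hlim (Filter.Eventually.of_forall hmem)

/-- At a maximizer `φ_j(w)` of the functional `L` on `F` one has
`L(φ_j(w)) = (L(w) + L(e_j)) / 3 ≤ (max L + 2c) / 3`, whence `max L ≤ c`. -/
lemma linear_le_of_mem {F : Set ℂ} (hF : IsAttractor phiF F) (a b c : ℝ)
    (h : ∀ j, a * (dF j).re + b * (dF j).im ≤ 2 * c) {z : ℂ} (hz : z ∈ F) :
    a * z.re + b * z.im ≤ c := by
  obtain ⟨hne, hc, hU⟩ := hF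
  have hcont : ContinuousOn (fun z : ℂ => a * z.re + b * z.im) F := by fun_prop
  obtain ⟨m, hm, hmax⟩ := hc.exists_isMaxOn hne hcont
  have hm' := hm
  rw [hU] at hm'
  obtain ⟨j, w, hw, rfl⟩ := Set.mem_iUnion.1 hm'
  have h1 : a * w.re + b * w.im ≤ a * (phiF j w).re + b * (phiF j w).im := hmax hw
  have h2 : a * z.re + b * z.im ≤ a * (phiF j w).re + b * (phiF j w).im := hmax hz
  have hre : (phiF j w).re = (w.re + (dF j).re) / 3 := by simp [phiF]
  have him : (phiF j w).im = (w.im + (dF j).im) / 3 := by simp [phiF]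
  rw [hre, him] at h1 h2
  linarith [h j]

/-- A quadrilateral containing `F`, touching the left, right and top sides of the unit square
only in `0`, `1 + i/2` and `1/2 + i`. -/
def InQuad (z : ℂ) : Prop :=
  0 ≤ z.im ∧ z.im ≤ 2 * z.re ∧ z.re + z.im ≤ 3 / 2 ∧ z.re - z.im ≤ 1 / 2

lemma inQuad_of_mem {F : Set ℂ} (hF : IsAttractor phiF F) {z : ℂ} (hz : z ∈ F) : InQuad z := by
  have h1 := linear_le_of_mem hF 0 (-1) 0 (by intro j; fin_cases j <;> norm_num [dF]) hz
  have h2 := linear_le_of_mem hF (-2) 1 0 (by intro j; fin_cases j <;> norm_num [dF]) hz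
  have h3 := linear_le_of_mem hF 1 1 (3 / 2) (by intro j; fin_cases j <;> norm_num [dF]) hz
  have h4 := linear_le_of_mem hF 1 (-1) (1 / 2) (by intro j; fin_cases j <;> norm_num [dF]) hz
  refine ⟨?_, ?_, ?_, ?_⟩ <;> linarith

/-! ### Which first-level pieces meet -/

/-- Equal letters, or letters adjacent in the chain `1 - 2 - 3 - 4`. -/
def AdjE (i j : Letter) : Prop :=
  i = j ∨ (i = l1 ∧ j = l2) ∨ (i = l2 ∧ j = l3) ∨ (i = l3 ∧ j = l4)

/-- Equal letters, or letters adjacent in the chain `1 - 2 - 3`. -/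
def AdjF (i j : Letter) : Prop :=
  i = j ∨ (i = l1 ∧ j = l2) ∨ (i = l2 ∧ j = l3)

lemma not_adj_of_disjoint {E : Set ℂ} (hE : IsAttractor phiE E) {i j : Letter}
    (h : phiE i '' E ∩ phiE j '' E = ∅) : ¬ AdjE i j := by
  have hmeet : ∀ s ∈ E, ∀ t ∈ E, phiE i s ≠ phiE j t := fun s hs t ht hst => by
    have : phiE i s ∈ phiE i '' E ∩ phiE j '' E := ⟨⟨s, hs, rfl⟩, ⟨t, ht, hst.symm⟩⟩
    simp [h] at this
  have hfix := fixedPoint_mem hE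
  rintro (rfl | ⟨rfl, rfl⟩ | ⟨rfl, rfl⟩ | ⟨rfl, rfl⟩)
  · exact hmeet _ (hfix l1) _ (hfix l1) rfl
  · exact hmeet _ (hfix l3) _ (hfix l1) (by simp [phiE, dE, l1, l2, l3])
  · refine hmeet _ (hfix l3) _ (hfix l1) ?_
    simp [phiE, dE, l1, l2, l3]
    norm_num
  · refine hmeet _ (hfix l5) _ (hfix l2) ?_
    simp [phiE, dE, l2, l3, l4, l5]
    ring

lemma phiF_eq_imp {i j : Letter} {s t : ℂ} (hs : InQuad s) (ht : InQuad t)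
    (h : phiF i s = phiF j t) : AdjF i j ∨ AdjF j i := by
  obtain ⟨s1, s2, s3, s4⟩ := hs
  obtain ⟨t1, t2, t3, t4⟩ := ht
  have h' : s + dF i = t + dF j := by
    simpa [phiF, div_left_inj'] using h
  have hre := congrArg Complex.re h'
  have him := congrArg Complex.im h'
  fin_cases i <;> fin_cases j <;>
    first
    | (left; simp [AdjF, l1, l2, l3]; done)
    | (right; simp [AdjF, l1, l2, l3]; done)
    | (exfalso; norm_num [dF] at hre him; linarith)

/-- The piece `φ^F_{35}(F)` lies strictly below `φ^F_2(F)`. -/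
lemma phiF_two_ne {s t : ℂ} (hs : InQuad s) (ht : InQuad t) :
    phiF l2 s ≠ phiF l3 (phiF l5 t) := by
  obtain ⟨s1, s2, s3, s4⟩ := hs
  obtain ⟨t1, t2, t3, t4⟩ := ht
  intro h
  have him := congrArg Complex.im h
  simp [phiF, dF, l2, l3, l5] at him
  linarith

/-! ### First letters of `g(x)` -/

lemma fword_succ (x : ℕ → Letter) (L : ℕ) :
    fword x 0 (L + 1) = x 0 :: fword x 1 L := by
  simp [fword, List.ofFn_succ, Nat.add_comm]

lemma gRel_first {x u : ℕ → Letter} (h : gRel x u) :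
    u 0 = x 0 ∨ (x 0 = l3 ∧ u 0 = l4) ∨ (x 0 = l4 ∧ u 0 = l3 ∧ u 1 = l5) := by
  obtain ⟨b, ⟨hb0, hseg⟩, hg⟩ := h
  have hs := hseg 0
  have hg := hg 0
  simp only [hb0, zero_add, Nat.sub_zero] at hs hg
  generalize b 1 = L at hs hg
  have hlen : (fword x 0 L).length = L := by simp [fword]
  rcases hs with (⟨hL, hx, -, -⟩ | ⟨hL, hx, -, -⟩) | ⟨hL, -⟩
  · obtain ⟨M, rfl⟩ : ∃ M, L = M + 2 := ⟨L - 2, by omega⟩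
    right; left
    refine ⟨hx, ?_⟩
    have h1 : fword x 0 (M + 2) ≠ [l4, l5] := by
      rw [fword_succ, hx]
      simp [l3, l4]
    have h2 : (fword x 0 (M + 2)).headI = l3 := by
      rw [fword_succ, hx]
      rfl
    rw [g0, if_neg (by omega), if_neg h1, if_pos h2, fword_succ] at hg
    exact (List.cons.inj hg).1
  · obtain ⟨M, rfl⟩ : ∃ M, L = M + 2 := ⟨L - 2, by omega⟩
    by_cases h1 : fword x 0 (M + 2) = [l4, l5]
    · right; right
      rw [g0, if_neg (by omega), if_pos h1, fword_succ] at hg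
      obtain ⟨h3, h4⟩ := List.cons.inj hg
      refine ⟨hx, h3, ?_⟩
      simp only [fword, List.ofFn_succ] at h4
      simpa using (List.cons.inj h4).1
    · left
      have h2 : (fword x 0 (M + 2)).headI ≠ l3 := by
        rw [fword_succ, hx]
        simp [l3, l4]
      rw [g0, if_neg (by omega), if_neg h1, if_neg h2, fword_succ] at hg
      rw [hx]
      exact (List.cons.inj hg).1
  · left
    subst hL
    rw [g0, if_pos (by omega), fword_succ, fword_succ] at hg
    exact (List.cons.inj hg).1

/-! ### Separation at the second level -/

lemma iterPhi_image_subset {φ : Letter → ℂ → ℂ} {K : Set ℂ} (hK : IsAttractor φ K)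
    (w : List Letter) : iterPhi φ w '' K ⊆ K := by
  induction w with
  | nil => simp [iterPhi]
  | cons j w ih =>
    rintro _ ⟨z, hz, rfl⟩
    rw [hK.2.2]
    exact Set.mem_iUnion.2 ⟨j, iterPhi φ w z, ih ⟨z, hz, rfl⟩, rfl⟩

/-- Cylinders of level at least `2` are contained in those of level `2`. -/
lemma exists_of_mem_cylinder {φ : Letter → ℂ → ℂ} {K : Set ℂ} (hK : IsAttractor φ K)
    {u : ℕ → Letter} {n : ℕ} (hn : 2 ≤ n) {z : ℂ} (hz : z ∈ iterPhi φ (preWord u n) '' K) :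
    ∃ a ∈ K, φ (u 1) a ∈ K ∧ z = φ (u 0) (φ (u 1) a) := by
  obtain ⟨m, rfl⟩ : ∃ m, n = m + 2 := ⟨n - 2, by omega⟩
  obtain ⟨a, ha, rfl⟩ := hz
  have hw : preWord u (m + 2) = u 0 :: u 1 :: preWord (fun i => u (i + 2)) m := by
    simp [preWord, List.ofFn_succ, Nat.add_assoc]
  rw [hw]
  have h1 := iterPhi_image_subset hK (preWord (fun i => u (i + 2)) m) ⟨a, ha, rfl⟩
  exact ⟨_, h1, iterPhi_image_subset hK [u 1] ⟨_, h1, rfl⟩, rfl⟩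

/-- The combinatorial core: first letters far apart for `E` are sent by `g` either to first
letters of disjoint pieces of `F`, or to `2` against the prefix `35`. -/
lemma first_letters {a b i j i' j' : Letter} (h : ¬ AdjE a b) (h' : ¬ AdjE b a)
    (hi : i = a ∨ (a = l3 ∧ i = l4) ∨ (a = l4 ∧ i = l3 ∧ i' = l5))
    (hj : j = b ∨ (b = l3 ∧ j = l4) ∨ (b = l4 ∧ j = l3 ∧ j' = l5)) :
    (¬ AdjF i j ∧ ¬ AdjF j i) ∨ (i = l2 ∧ j = l3 ∧ j' = l5) ∨ (j = l2 ∧ i = l3 ∧ i' = l5) := by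
  unfold AdjE at h h'
  unfold AdjF
  simp only [l1, l2, l3, l4, l5] at *
  revert a b i j i' j'
  decide

lemma cylinders_disjoint {E F : Set ℂ} (hE : IsAttractor phiE E) (hF : IsAttractor phiF F)
    {x y u v : ℕ → Letter} (hsep : SepNum phiE E x y 0) (hu : gRel x u) (hv : gRel y v)
    {n : ℕ} (hn : 2 ≤ n) {z : ℂ} (hz : z ∈ iterPhi phiF (preWord u n) '' F)
    (hz' : z ∈ iterPhi phiF (preWord v n) '' F) : False := by
  have h1 := hsep.2 1 one_pos
  simp only [preWord, List.ofFn_succ, List.ofFn_zero, iterPhi, Function.comp_id] at h1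
  obtain ⟨s, hs, hs', rfl⟩ := exists_of_mem_cylinder hF hn hz
  obtain ⟨t, ht, ht', hst⟩ := exists_of_mem_cylinder hF hn hz'
  rcases first_letters (not_adj_of_disjoint hE h1)
    (not_adj_of_disjoint hE (Set.inter_comm _ _ ▸ h1)) (gRel_first hu) (gRel_first hv) with
    ⟨ha, hb⟩ | ⟨ha, hb, hc⟩ | ⟨ha, hb, hc⟩
  · exact (phiF_eq_imp (inQuad_of_mem hF hs') (inQuad_of_mem hF ht') hst).elim ha hb
  · rw [ha, hb, hc] at hst
    exact phiF_two_ne (inQuad_of_mem hF hs') (inQuad_of_mem hF ht) hst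
  · rw [ha, hb, hc] at hst
    exact phiF_two_ne (inQuad_of_mem hF ht') (inQuad_of_mem hF hs) hst.symm

/-- If `x, y ∈ Ω`, `π_E(x) ≠ π_E(y)` and `Λ_E(x,y) = 0`, then
`π_F(g(x)) ≠ π_F(g(y))` and `Λ_F(g(x),g(y)) ≤ 1`; in particular
`|Λ_E(x,y) − Λ_F(g(x),g(y))| ≤ 3`. -/
theorem stmt15 (E F : Set ℂ) (hE : IsAttractor phiE E) (hF : IsAttractor phiF F)
    (x y : ℕ → Letter) (hx : x ∈ OmegaSeq) (hy : y ∈ OmegaSeq)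
    (p q : ℂ) (hp : codes phiE E x p) (hq : codes phiE E y q) (hpq : p ≠ q)
    (hsep : SepNum phiE E x y 0)
    (u v : ℕ → Letter) (hu : gRel x u) (hv : gRel y v)
    (p' q' : ℂ) (hp' : codes phiF F u p') (hq' : codes phiF F v q') :
    p' ≠ q' ∧ ∀ n, SepNum phiF F u v n → n ≤ 1 ∧ |(0 : ℤ) - (n : ℤ)| ≤ 3 := by
  refine ⟨?_, fun n hn => ?_⟩
  · rintro rfl
    exact cylinders_disjoint hE hF hsep hu hv le_rfl (hp' 2) (hq' 2)
  · have hle : n ≤ 1 := by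
      by_contra hlt
      obtain ⟨z, hz, hz'⟩ := hn.1
      exact cylinders_disjoint hE hF hsep hu hv (by omega) hz hz'
    refine ⟨hle, ?_⟩
    rw [abs_le]
    omega
end
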